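/- arXiv:2208.13223 — 2 statements merged into one kernel-verified Lean document; each statement's English description precedes it below -/
import Mathlib

section
/- In the FSN network Ḡ of G defined from the Perron eigenvector of P, every node is reachable from the leader set: for every node i ∈ V there exist a leader l (i.e., δ_l > 0) and a finite sequence of nodes i = i₀, i₁, …, i_p = l such that w̄_{i_k i_{k+1}} > 0 for every k. -/
/-!
At a node `i` with `δ i = 0`, the value `(P v) i` is the average of `v` with weights `w_ij`. Since
`P v = λ v < v`, this average lies below `v i`, so some `j` with `w_ij > 0` has `v j < v i`: every
non-leader has an FSN edge to a node with a smaller value. As `v` strictly decreases along FSN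
edges, following them must stop, and it can only stop at a leader.
-/

open Matrix Polynomial

/-- The weighted digraph of `W` is strongly connected. -/
def StronglyConnected {n : ℕ} (W : Matrix (Fin n) (Fin n) ℝ) : Prop :=
  ∀ i j : Fin n, Relation.ReflTransGen (fun a b => 0 < W a b) i j

/-- The in-degree matrix `D = diag(d₁, …, d_n)` with `d_i = ∑ j, w_ij`. -/
def degMat {n : ℕ} (W : Matrix (Fin n) (Fin n) ℝ) : Matrix (Fin n) (Fin n) ℝ :=
  Matrix.diagonal fun i => ∑ j, W i j

/-- The perturbed stochastic matrix `P = (D + diag(δ))⁻¹ W`. -/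
noncomputable def Pmat {n : ℕ} (W : Matrix (Fin n) (Fin n) ℝ) (δ : Fin n → ℝ) :
    Matrix (Fin n) (Fin n) ℝ :=
  (degMat W + Matrix.diagonal δ)⁻¹ * W

/-- The FSN adjacency matrix: `w̄_ij = w_ij` if `v_i > v_j`, else `0`. -/
noncomputable def fsn {n : ℕ} (W : Matrix (Fin n) (Fin n) ℝ) (v : Fin n → ℝ) :
    Matrix (Fin n) (Fin n) ℝ :=
  Matrix.of fun i j => if v j < v i then W i j else 0

theorem exists_reflTransGen_of_wellFounded_flip {α : Type*} {r : α → α → Prop}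
    (hr : WellFounded (flip r)) {p : α → Prop} (hstep : ∀ a, ¬p a → ∃ b, r a b) (a : α) :
    ∃ b, p b ∧ Relation.ReflTransGen r a b := by
  obtain ⟨b, hab, hmin⟩ := hr.has_min {b | Relation.ReflTransGen r a b} ⟨a, .refl⟩
  refine ⟨b, by_contra fun hb => ?_, hab⟩
  obtain ⟨c, hbc⟩ := hstep b hb
  exact hmin c (.tail hab hbc) hbc

theorem exists_pos_weight_and_lt_of_sum_mul_lt {ι R : Type*} [Semiring R] [LinearOrder R]
    [IsOrderedRing R] {s : Finset ι} {w x : ι → R} {c : R} (hw : ∀ j ∈ s, 0 ≤ w j)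
    (h : ∑ j ∈ s, w j * x j < (∑ j ∈ s, w j) * c) : ∃ j ∈ s, 0 < w j ∧ x j < c := by
  rw [Finset.sum_mul] at h
  obtain ⟨j, hj, hlt⟩ := Finset.exists_lt_of_sum_lt h
  have hne : w j ≠ 0 := fun h0 => by simp [h0] at hlt
  have hxj : x j < c := lt_of_not_ge fun hc =>
    hlt.not_ge (mul_le_mul_of_nonneg_left hc (hw j hj))
  exact ⟨j, hj, (hw j hj).lt_of_ne' hne, hxj⟩

section FSN

variable {n : ℕ} {W : Matrix (Fin n) (Fin n) ℝ} {δ v : Fin n → ℝ}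

theorem fsn_pos_iff {i j : Fin n} : 0 < fsn W v i j ↔ v j < v i ∧ 0 < W i j := by
  by_cases h : v j < v i <;> simp [fsn, h]

theorem wellFounded_flip_fsn_pos (W : Matrix (Fin n) (Fin n) ℝ) (v : Fin n → ℝ) :
    WellFounded (flip fun i j => 0 < fsn W v i j) := by
  have hlt : WellFounded fun i j : Fin n => v i < v j :=
    InvImage.wf (Set.rangeFactorization v) wellFounded_lt
  exact Subrelation.wf (fun h => (fsn_pos_iff.mp h).1) hlt

theorem mul_Pmat_mulVec_apply (hdeg : ∀ i, ∑ j, W i j + δ i ≠ 0) (v : Fin n → ℝ) (i : Fin n) :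
    (∑ j, W i j + δ i) * (Pmat W δ *ᵥ v) i = ∑ j, W i j * v j := by
  have hdiag : degMat W + diagonal δ = diagonal fun i => ∑ j, W i j + δ i :=
    diagonal_add _ _
  have hdet : IsUnit (diagonal fun i => ∑ j, W i j + δ i).det := by
    rw [det_diagonal, isUnit_iff_ne_zero]
    exact Finset.prod_ne_zero_iff.mpr fun i _ => hdeg i
  have hmul : (diagonal fun i => ∑ j, W i j + δ i) *ᵥ (Pmat W δ *ᵥ v) = W *ᵥ v := by
    rw [mulVec_mulVec, Pmat, hdiag, mul_nonsing_inv_cancel_left _ _ hdet]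
  exact (mulVec_diagonal _ _ i).symm.trans (congrFun hmul i)

theorem exists_fsn_pos_of_Pmat_mulVec_lt (hW : ∀ i j, 0 ≤ W i j)
    (hdeg : ∀ i, 0 < ∑ j, W i j + δ i) {i : Fin n} (hi : δ i = 0)
    (hlt : (Pmat W δ *ᵥ v) i < v i) : ∃ j, 0 < fsn W v i j := by
  have hsum : ∑ j, W i j * v j < (∑ j, W i j) * v i :=
    calc
      ∑ j, W i j * v j = (∑ j, W i j + δ i) * (Pmat W δ *ᵥ v) i :=
        (mul_Pmat_mulVec_apply (fun k => (hdeg k).ne') v i).symm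
      _ < (∑ j, W i j + δ i) * v i := mul_lt_mul_of_pos_left hlt (hdeg i)
      _ = (∑ j, W i j) * v i := by rw [hi, add_zero]
  obtain ⟨j, -, hWij, hvj⟩ := exists_pos_weight_and_lt_of_sum_mul_lt (fun j _ => hW i j) hsum
  exact ⟨j, fsn_pos_iff.mpr ⟨hvj, hWij⟩⟩

end FSN

theorem fsn_reachable_from_leaders_dlfn_general {n : ℕ} (W : Matrix (Fin n) (Fin n) ℝ)
    (hW : ∀ i j, 0 ≤ W i j) (δ : Fin n → ℝ) (hδ : ∀ i, 0 ≤ δ i)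
    (hdeg : ∀ i, 0 < ∑ j, W i j + δ i) (v : Fin n → ℝ)
    (hv : ∀ i, δ i = 0 → (Pmat W δ *ᵥ v) i < v i) (i : Fin n) :
    ∃ l, 0 < δ l ∧ Relation.ReflTransGen (fun a b => 0 < fsn W v a b) i l := by
  refine exists_reflTransGen_of_wellFounded_flip (wellFounded_flip_fsn_pos W v) (fun a ha => ?_) i
  have ha0 : δ a = 0 := le_antisymm (not_lt.mp ha) (hδ a)
  exact exists_fsn_pos_of_Pmat_mulVec_lt hW hdeg ha0 (hv a ha0)

/-- In the FSN network obtained from the Perron eigenvector of `P`,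
every node is reachable from the leader set. -/
theorem fsn_reachable_from_leaders_dlfn
    {n : ℕ} (W : Matrix (Fin n) (Fin n) ℝ)
    (hWnonneg : ∀ i j, 0 ≤ W i j) (hWdiag : ∀ i, 0 < W i i)
    (hconn : StronglyConnected W)
    (δ : Fin n → ℝ) (hδnonneg : ∀ i, 0 ≤ δ i) (hδne : δ ≠ 0)
    (lamn : ℝ) (hlamn : lamn < 1)
    (v : Fin n → ℝ) (hv : ∀ i, 0 < v i)
    (hveig : Pmat W δ *ᵥ v = lamn • v) :
    ∀ i : Fin n, ∃ l : Fin n, 0 < δ l ∧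
      Relation.ReflTransGen (fun a b => 0 < fsn W v a b) i l := by
  have hdeg (i : Fin n) : 0 < ∑ j, W i j + δ i := add_pos_of_pos_of_nonneg
    (Finset.sum_pos' (fun j _ => hWnonneg i j) ⟨i, Finset.mem_univ i, hWdiag i⟩) (hδnonneg i)
  have hlt (i : Fin n) : (Pmat W δ *ᵥ v) i < v i :=
    hveig ▸ mul_lt_of_lt_one_left (hv i) hlamn
  exact fsn_reachable_from_leaders_dlfn_general W hWnonneg δ hδnonneg hdeg v fun i _ => hlt i
end

section
/- If the follower set is nonempty, i.e., δ_i = 0 for at least one node i, then there exists at least one edge (i,j) ∈ E (that is, w_ij > 0) such that v_j > v_i. -/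
open Matrix Polynomial

/-!
A vector that is constant on the nodes satisfies `W v = D v`. At a follower `i` the eigenvalue
equation reads `(W v)ᵢ = μ (D v)ᵢ`, so when `μ ≠ 1` and `vᵢ ≠ 0` the eigenvector `v` cannot be
constant. Strong connectivity then provides a directed path from a node to one with a larger
value, and the value has to increase along some edge of that path.
-/

theorem exists_rel_lt_of_reflTransGen {α β : Type*} [LinearOrder β] {r : α → α → Prop}
    {f : α → β} {a b : α} (hab : Relation.ReflTransGen r a b) (hlt : f a < f b) :
    ∃ c d, r c d ∧ f c < f d := by
  induction hab with
  | refl => exact absurd hlt (lt_irrefl _)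
  | @tail c d _ hcd ih =>
    rcases lt_or_ge (f c) (f d) with hlast | hle
    · exact ⟨c, d, hcd, hlast⟩
    · exact ih (hlt.trans_le hle)

theorem mulVec_eq_smul_mulVec_of_inv_mul_mulVec {m R : Type*} [Fintype m] [DecidableEq m]
    [CommRing R] {A B : Matrix m m R} {μ : R} {v : m → R} (hA : IsUnit A)
    (h : (A⁻¹ * B) *ᵥ v = μ • v) : B *ᵥ v = μ • (A *ᵥ v) := by
  have hdet : IsUnit A.det := (Matrix.isUnit_iff_isUnit_det A).mp hA
  calc B *ᵥ v = A *ᵥ ((A⁻¹ * B) *ᵥ v) := by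
        rw [mulVec_mulVec, mul_nonsing_inv_cancel_left _ _ hdet]
    _ = μ • (A *ᵥ v) := by rw [h, mulVec_smul]

theorem mulVec_apply_of_forall_eq {l m R : Type*} [Fintype m] [NonUnitalNonAssocSemiring R]
    (A : Matrix l m R) {v : m → R} {c : R} (hv : ∀ j, v j = c) (i : l) :
    (A *ᵥ v) i = (∑ j, A i j) * c := by
  simp only [mulVec, dotProduct, hv, Finset.sum_mul]

section

variable {n : ℕ} {W : Matrix (Fin n) (Fin n) ℝ} {δ v : Fin n → ℝ} {μ : ℝ} {i : Fin n}

theorem StronglyConnected.exists_edge_lt_of_ne {β : Type*} [LinearOrder β]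
    (hconn : StronglyConnected W) {f : Fin n → β} {i j : Fin n} (hne : f i ≠ f j) :
    ∃ a b, 0 < W a b ∧ f a < f b := by
  rcases hne.lt_or_gt with hlt | hgt
  · exact exists_rel_lt_of_reflTransGen (hconn i j) hlt
  · exact exists_rel_lt_of_reflTransGen (hconn j i) hgt

theorem degMat_add_diagonal (W : Matrix (Fin n) (Fin n) ℝ) (δ : Fin n → ℝ) :
    degMat W + diagonal δ = diagonal fun i => (∑ j, W i j) + δ i :=
  diagonal_add _ _

theorem isUnit_degMat_add_diagonal_iff :
    IsUnit (degMat W + diagonal δ) ↔ ∀ i, (∑ j, W i j) + δ i ≠ 0 := by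
  simp only [degMat_add_diagonal, isUnit_diagonal, Pi.isUnit_iff, isUnit_iff_ne_zero]

theorem exists_ne_of_Pmat_mulVec_eq_smul (hunit : IsUnit (degMat W + diagonal δ)) (hμ : μ ≠ 1)
    (hveig : Pmat W δ *ᵥ v = μ • v) (hδi : δ i = 0) (hvi : v i ≠ 0) :
    ∃ j, v j ≠ v i := by
  by_contra! hconst
  have hdeg : ∑ j, W i j ≠ 0 := by
    simpa only [hδi, add_zero] using isUnit_degMat_add_diagonal_iff.mp hunit i
  have hrow : (W *ᵥ v) i = μ * ((∑ j, W i j) * v i) := by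
    rw [mulVec_eq_smul_mulVec_of_inv_mul_mulVec hunit hveig, degMat_add_diagonal,
      Pi.smul_apply, mulVec_diagonal, hδi, add_zero, smul_eq_mul]
  rw [mulVec_apply_of_forall_eq W hconst] at hrow
  exact hμ ((right_eq_mul₀ (mul_ne_zero hdeg hvi)).mp hrow)

theorem exists_increasing_edge_of_follower_dlfn_general (hconn : StronglyConnected W)
    (hunit : IsUnit (degMat W + diagonal δ)) (hμ : μ ≠ 1)
    (hveig : Pmat W δ *ᵥ v = μ • v) (hfollower : ∃ i, δ i = 0 ∧ v i ≠ 0) :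
    ∃ i j : Fin n, 0 < W i j ∧ v i < v j := by
  obtain ⟨i, hδi, hvi⟩ := hfollower
  obtain ⟨j, hne⟩ := exists_ne_of_Pmat_mulVec_eq_smul hunit hμ hveig hδi hvi
  exact hconn.exists_edge_lt_of_ne hne

theorem isUnit_degMat_add_diagonal_of_nonneg (hWnonneg : ∀ i j, 0 ≤ W i j)
    (hWrow : ∀ i, ∃ j, 0 < W i j) (hδnonneg : ∀ i, 0 ≤ δ i) :
    IsUnit (degMat W + diagonal δ) := by
  refine isUnit_degMat_add_diagonal_iff.mpr fun i => ?_
  obtain ⟨j, hij⟩ := hWrow i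
  have hdeg : 0 < ∑ j, W i j :=
    Finset.sum_pos' (fun k _ => hWnonneg i k) ⟨j, Finset.mem_univ j, hij⟩
  exact (add_pos_of_pos_of_nonneg hdeg (hδnonneg i)).ne'

end

/-- If the follower set is nonempty (some `δ i = 0`), then there exists
an edge `(i, j) ∈ E` (i.e. `w_ij > 0`) with `v_j > v_i`. -/
theorem exists_increasing_edge_of_follower_dlfn
    {n : ℕ} (W : Matrix (Fin n) (Fin n) ℝ)
    (hWnonneg : ∀ i j, 0 ≤ W i j) (hWdiag : ∀ i, 0 < W i i)
    (hconn : StronglyConnected W)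
    (δ : Fin n → ℝ) (hδnonneg : ∀ i, 0 ≤ δ i) (hδne : δ ≠ 0)
    (lamn : ℝ) (hlamn : lamn < 1)
    (v : Fin n → ℝ) (hv : ∀ i, 0 < v i)
    (hveig : Pmat W δ *ᵥ v = lamn • v)
    (hfollower : ∃ i, δ i = 0) :
    ∃ i j : Fin n, 0 < W i j ∧ v i < v j := by
  have hunit := isUnit_degMat_add_diagonal_of_nonneg hWnonneg (fun i => ⟨i, hWdiag i⟩) hδnonneg
  exact exists_increasing_edge_of_follower_dlfn_general hconn hunit hlamn.ne hveig
    (hfollower.imp fun i hδi => ⟨hδi, (hv i).ne'⟩)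
end
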